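/- For every n∈ℕ, W>0, λ₀∈(−2,2) and ξ₁,ξ₂∈ℝ: F₂(λ₀+ξ₁/(Nρ(λ₀)), λ₀+ξ₂/(Nρ(λ₀))) = −(2π²)^{−N}·(det J)^{−2}·∫ exp{−(W²/2)∑_{j=−n+1}^{n}Tr(X_j−X_{j−1})²}·exp{−(1/2)∑_{j=−n}^{n}Tr(X_j+iΛ₀/2+i ξ̂/(Nρ(λ₀)))²}·∏_{j=−n}^{n}det(X_j−iΛ₀/2) ∏_{j=−n}^{n}dX_j, where the (absolutely convergent) integral runs over N-tuples (X_{−n},…,X_n) of 2×2 Hermitian matrices, dX_j=d(X_j)_{11}·d(X_j)_{22}·dRe(X_j)_{12}·dIm(X_j)_{12}, Λ₀=diag(λ₀,λ₀), and ξ̂=diag(ξ₁,ξ₂). -/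

import Mathlib

open MeasureTheory

/-- The `N×N` matrix `−Δ` (discrete Neumann Laplacian): symmetric tridiagonal,
diagonal `(1,2,…,2,1)`, sub/superdiagonal `−1`. -/
noncomputable def negLap (m : ℕ) : Matrix (Fin m) (Fin m) ℝ :=
  Matrix.of fun i j =>
    if i = j then 2 - (if (i : ℕ) = 0 then 1 else 0) - (if (i : ℕ) = m - 1 then 1 else 0)
    else if (i : ℕ) + 1 = (j : ℕ) ∨ (j : ℕ) + 1 = (i : ℕ) then -1 else 0

/-- `J = (−W²Δ + 1)^{−1}`. -/
noncomputable def Jmat (n : ℕ) (W : ℝ) : Matrix (Fin (2*n+1)) (Fin (2*n+1)) ℝ :=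
  (W^2 • negLap (2*n+1) + 1)⁻¹

/-- The Hermitian band matrix built from diagonal entries `d` and, for `i<j`, real and
imaginary parts `o ⟨(i,j)⟩ = (Re H_{ij}, Im H_{ij})` of the off-diagonal entries. -/
noncomputable def bandH (n : ℕ) (d : Fin (2*n+1) → ℝ)
    (o : {q : Fin (2*n+1) × Fin (2*n+1) // q.1 < q.2} → ℝ × ℝ) :
    Matrix (Fin (2*n+1)) (Fin (2*n+1)) ℂ :=
  Matrix.of fun i j =>
    if h : i < j then ⟨(o ⟨(i, j), h⟩).1, (o ⟨(i, j), h⟩).2⟩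
    else if h' : j < i then ⟨(o ⟨(j, i), h'⟩).1, -((o ⟨(j, i), h'⟩).2)⟩
    else ((d i : ℝ) : ℂ)

/-- The Gaussian density of the 1D band-matrix ensemble: the `H_{ii}` are independent centered
real Gaussians of variance `J_{ii}` and, for `i<j`, `Re H_{ij}`, `Im H_{ij}` are independent
centered Gaussians of variance `J_{ij}/2`. -/
noncomputable def bandDens (n : ℕ) (W : ℝ) (d : Fin (2*n+1) → ℝ)
    (o : {q : Fin (2*n+1) × Fin (2*n+1) // q.1 < q.2} → ℝ × ℝ) : ℝ :=
  (∏ i, (Real.sqrt (2 * Real.pi * Jmat n W i i))⁻¹ *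
      Real.exp (-(d i)^2 / (2 * Jmat n W i i))) *
  ∏ q : {q : Fin (2*n+1) × Fin (2*n+1) // q.1 < q.2},
    (Real.pi * Jmat n W q.1.1 q.1.2)⁻¹ *
      Real.exp (-(((o q).1)^2 + ((o q).2)^2) / Jmat n W q.1.1 q.1.2)

/-- `F₂(λ₁,λ₂) = E{det(λ₁−H)·det(λ₂−H)}` for the 1D band-matrix ensemble. -/
noncomputable def F2 (n : ℕ) (W : ℝ) (l1 l2 : ℝ) : ℂ :=
  ∫ ω : (Fin (2*n+1) → ℝ) × ({q : Fin (2*n+1) × Fin (2*n+1) // q.1 < q.2} → ℝ × ℝ),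
    ((bandDens n W ω.1 ω.2 : ℝ) : ℂ) *
      ((l1 : ℂ) • (1 : Matrix (Fin (2*n+1)) (Fin (2*n+1)) ℂ) - bandH n ω.1 ω.2).det *
      ((l2 : ℂ) • (1 : Matrix (Fin (2*n+1)) (Fin (2*n+1)) ℂ) - bandH n ω.1 ω.2).det

/-- `ρ(λ) = √(4−λ²)/(2π)`. -/
noncomputable def rho (l : ℝ) : ℝ := Real.sqrt (4 - l^2) / (2 * Real.pi)

/-- A 2×2 Hermitian matrix parametrized by `(v 0, v 1) = ` diagonal and
`v 2 + i v 3 = ` off-diagonal entry. -/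
noncomputable def herm2 (v : Fin 4 → ℝ) : Matrix (Fin 2) (Fin 2) ℂ :=
  !![((v 0 : ℝ) : ℂ), ⟨v 2, v 3⟩; ⟨v 2, -(v 3)⟩, ((v 1 : ℝ) : ℂ)]

/-- The sequence `X_{−n},…,X_n` of Hermitian 2×2 matrices (indexed through `ℕ`, extended
by `0` out of range). -/
noncomputable def Xseq (n : ℕ) (t : Fin (2*n+1) → Fin 4 → ℝ) (j : ℕ) :
    Matrix (Fin 2) (Fin 2) ℂ :=
  if h : j < 2*n+1 then herm2 (t ⟨j, h⟩) else 0

/-- The integrand of the integral representation (1.18)/(2.10):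
`exp{−(W²/2)∑Tr(X_j−X_{j−1})² − (1/2)∑Tr(X_j+iΛ₀/2+iξ̂/(Nρ))²}·∏det(X_j−iΛ₀/2)`. -/
noncomputable def G1 (n : ℕ) (W l0 ξ₁ ξ₂ : ℝ) (t : Fin (2*n+1) → Fin 4 → ℝ) : ℂ :=
  Complex.exp
    (-(((W : ℝ) : ℂ)^2/2) * ∑ j ∈ Finset.Ico 1 (2*n+1),
        ((Xseq n t j - Xseq n t (j-1))^2).trace
      - (1/2 : ℂ) * ∑ j ∈ Finset.range (2*n+1),
        ((Xseq n t j + (Complex.I * (l0 : ℂ)/2) • (1 : Matrix (Fin 2) (Fin 2) ℂ)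
            + (Complex.I / (((2*n+1 : ℝ) * rho l0 : ℝ) : ℂ)) •
              Matrix.diagonal ![((ξ₁ : ℝ) : ℂ), ((ξ₂ : ℝ) : ℂ)])^2).trace)
  * ∏ j ∈ Finset.range (2*n+1),
      (Xseq n t j - (Complex.I * (l0 : ℂ)/2) • (1 : Matrix (Fin 2) (Fin 2) ℂ)).det

/-!
By Wick's theorem, the average of `det (A + Z)` over a Gaussian matrix `Z` depends on the covariance
only after antisymmetrising it in the column indices, because exchanging the columns of two
contracted rows flips the sign of the permutation. Hence two Gaussian matrices whose covariances
differ by a transposition of columns and a sign have the same averaged determinant. Here this is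
applied to `-(H ⊗ 1₂)`, where `∏ det (λ_b - H) = det (diag λ - H ⊗ 1₂)`, and to the block diagonal
matrix with blocks `i X_j`, where `X` is the Gaussian family with weight
`exp (-½ ∑ (J⁻¹)ⱼₖ Tr XⱼXₖ)`. Wick's theorem, being integration by parts, holds equally for the
Gaussian weight on a shifted contour `x + ia`, so no contour deformation is needed.
-/

section Gaussian

open Complex (I)

variable {E : Type*} [NormedAddCommGroup E] [NormedSpace ℝ E]

lemma hasTemperateGrowth_prod {κ : Type*} (s : Finset κ) {f : κ → E → ℂ}
    (hf : ∀ k, (f k).HasTemperateGrowth) : (fun x => ∏ k ∈ s, f k x).HasTemperateGrowth := by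
  classical
  induction s using Finset.induction_on with
  | empty => simpa only [Finset.prod_empty] using Function.HasTemperateGrowth.const 1
  | insert k s hk ih => simpa only [Finset.prod_insert hk] using (hf k).fun_mul ih

lemma hasTemperateGrowth_fderiv_apply {f : E → ℂ} (hf : f.HasTemperateGrowth) (u : E) :
    (fun x => fderiv ℝ f x u).HasTemperateGrowth := by
  have hfderiv : (fderiv ℝ f).HasTemperateGrowth := by
    refine ⟨hf.1.fderiv_right (by simp), fun n => ?_⟩
    obtain ⟨k, C, hC⟩ := hf.2 (n + 1)
    exact ⟨k, C, fun x => norm_iteratedFDeriv_fderiv.trans_le (hC x)⟩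
  exact (ContinuousLinearMap.apply ℝ ℂ u).hasTemperateGrowth.comp hfderiv

lemma exists_pos_mul_sq_norm_le [FiniteDimensional ℝ E] {B : LinearMap.BilinForm ℝ E}
    (hB : ∀ x, x ≠ 0 → 0 < B x x) : ∃ ε > 0, ∀ x, ε * ‖x‖ ^ 2 ≤ B x x := by
  have hcont : Continuous fun x => B x x :=
    B.toContinuousBilinearMap.continuous₂.comp (continuous_id.prodMk continuous_id)
  rcases subsingleton_or_nontrivial E with _ | _
  · exact ⟨1, one_pos, fun x => by simp [Subsingleton.elim x 0]⟩
  obtain ⟨x₀, hx₀, hmin⟩ := (isCompact_sphere (0 : E) 1).exists_isMinOn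
    (NormedSpace.sphere_nonempty.mpr zero_le_one) hcont.continuousOn
  refine ⟨B x₀ x₀, hB x₀ (ne_zero_of_mem_unit_sphere ⟨x₀, hx₀⟩), fun x => ?_⟩
  rcases eq_or_ne x 0 with rfl | hx
  · simp
  have hunit : ‖x‖⁻¹ • x ∈ Metric.sphere (0 : E) 1 := by simp [norm_smul, hx]
  have hle : B x₀ x₀ ≤ ‖x‖⁻¹ * (‖x‖⁻¹ * B x x) := by simpa using hmin hunit
  have : 0 < ‖x‖ := norm_pos_iff.mpr hx
  calc B x₀ x₀ * ‖x‖ ^ 2 ≤ ‖x‖⁻¹ * (‖x‖⁻¹ * B x x) * ‖x‖ ^ 2 := by gcongr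
    _ = B x x := by field_simp

/-- The Gaussian weight `exp(-B(x + ia, x + ia) / 2)` of a real bilinear form `B`, extended
complex-bilinearly and evaluated at the complex point `x + ia`. -/
noncomputable def shiftedGaussian (B : LinearMap.BilinForm ℝ E) (a x : E) : ℂ :=
  Complex.exp (-(B x x - B a a + 2 * I * B x a) / 2)

/-- The value `φ(x) + iφ(a)` at `x + ia` of the complex-linear extension of a real functional. -/
noncomputable def shiftedEval (a : E) (φ : E →ₗ[ℝ] ℂ) (x : E) : ℂ := φ x + I * φ a

lemma shiftedEval_zero (φ : E →ₗ[ℝ] ℂ) : shiftedEval 0 φ = φ := by ext; simp [shiftedEval]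

variable {B : LinearMap.BilinForm ℝ E}

lemma norm_shiftedGaussian (a x : E) :
    ‖shiftedGaussian B a x‖ = Real.exp (B a a / 2) * Real.exp (-(B x x) / 2) := by
  rw [shiftedGaussian, Complex.norm_exp, ← Real.exp_add]
  congr 1
  simp only [Complex.div_ofNat_re, Complex.add_re, Complex.sub_re, Complex.neg_re, Complex.mul_re,
    Complex.mul_im, Complex.re_ofNat, Complex.im_ofNat, Complex.I_re, Complex.I_im,
    Complex.ofReal_re, Complex.ofReal_im]
  ring

variable [FiniteDimensional ℝ E]

lemma hasTemperateGrowth_shiftedEval (a : E) (φ : E →ₗ[ℝ] ℂ) :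
    (shiftedEval a φ).HasTemperateGrowth :=
  φ.toContinuousLinearMap.hasTemperateGrowth.add (.const _)

lemma hasFDerivAt_shiftedEval (a : E) (φ : E →ₗ[ℝ] ℂ) (x : E) :
    HasFDerivAt (shiftedEval a φ) φ.toContinuousLinearMap x :=
  φ.toContinuousLinearMap.hasFDerivAt.add_const _

lemma hasFDerivAt_shiftedGaussian (hsymm : B.IsSymm) (a x : E) :
    HasFDerivAt (shiftedGaussian B a) (-shiftedGaussian B a x •
      (Complex.ofRealCLM ∘L (B x).toContinuousLinearMap +
        I • Complex.ofRealCLM ∘L (B a).toContinuousLinearMap)) x := by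
  have hquad : HasFDerivAt (fun x => B x x) _ x :=
    B.toContinuousBilinearMap.hasFDerivAt_of_bilinear (hasFDerivAt_id x) (hasFDerivAt_id x)
  have hlin : HasFDerivAt (fun x => B x a) _ x :=
    (B.flip a).toContinuousLinearMap.hasFDerivAt
  have hexp := (((Complex.ofRealCLM.hasFDerivAt.comp x hquad).sub_const (B a a : ℂ)).add
    ((Complex.ofRealCLM.hasFDerivAt.comp x hlin).const_mul (2 * I))).fun_neg.mul_const
      (2⁻¹ : ℂ) |>.cexp
  refine hexp.congr_fderiv ?_
  ext u
  simp [shiftedGaussian, hsymm.eq, div_eq_mul_inv]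
  ring

lemma continuous_shiftedGaussian (hsymm : B.IsSymm) (a : E) : Continuous (shiftedGaussian B a) :=
  continuous_iff_continuousAt.mpr fun x => (hasFDerivAt_shiftedGaussian hsymm a x).continuousAt

lemma exists_one_add_pow_mul_exp_neg_mul_sq_le (m : ℕ) {ε : ℝ} (hε : 0 < ε) :
    ∃ C, ∀ r, 0 ≤ r → (1 + r) ^ m * Real.exp (-(ε * r ^ 2)) ≤ C := by
  refine ⟨m.factorial * Real.exp (1 + 1 / (4 * ε)), fun r hr => ?_⟩
  have hpow : (1 + r) ^ m ≤ m.factorial * Real.exp (1 + r) :=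
    (div_le_iff₀' (by positivity)).mp (Real.pow_div_factorial_le_exp (1 + r) (by positivity) m)
  have hsq : 1 + r - ε * r ^ 2 ≤ 1 + 1 / (4 * ε) := by
    have : 1 / (4 * ε) - r + ε * r ^ 2 = ε * (r - 1 / (2 * ε)) ^ 2 := by field_simp; ring
    linarith [mul_nonneg hε.le (sq_nonneg (r - 1 / (2 * ε)))]
  calc (1 + r) ^ m * Real.exp (-(ε * r ^ 2))
      ≤ m.factorial * Real.exp (1 + r) * Real.exp (-(ε * r ^ 2)) := by gcongr
    _ = m.factorial * Real.exp (1 + r - ε * r ^ 2) := by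
        rw [mul_assoc, ← Real.exp_add, ← sub_eq_add_neg]
    _ ≤ _ := by gcongr

variable [MeasurableSpace E] [BorelSpace E] {μ : Measure E} [μ.IsAddHaarMeasure]

lemma integrable_mul_shiftedGaussian (hsymm : B.IsSymm) (hpos : ∀ x, x ≠ 0 → 0 < B x x)
    {f : E → ℂ} (hf : f.HasTemperateGrowth) (a : E) :
    Integrable (fun x => f x * shiftedGaussian B a x) μ := by
  obtain ⟨ε, hε, hcoercive⟩ := exists_pos_mul_sq_norm_le hpos
  obtain ⟨k, C, hC, hfC⟩ := hf.norm_iteratedFDeriv_le_uniform 0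
  set d := μ.integrablePower
  obtain ⟨M, hM⟩ := exists_one_add_pow_mul_exp_neg_mul_sq_le (k + d) (half_pos hε)
  refine (μ.integrable_pow_neg_integrablePower.const_mul (C * Real.exp (B a a / 2) * M)).mono'
    (hf.1.continuous.mul (continuous_shiftedGaussian hsymm a)).aestronglyMeasurable
    (.of_forall fun x => ?_)
  have hfx : ‖f x‖ ≤ C * (1 + ‖x‖) ^ k := by simpa using hfC 0 le_rfl x
  have hw : Real.exp (-(B x x) / 2) ≤ Real.exp (-(ε / 2 * ‖x‖ ^ 2)) :=
    Real.exp_le_exp.mpr (by linarith [hcoercive x])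
  rw [Real.rpow_neg (by positivity), Real.rpow_natCast, ← div_eq_mul_inv,
    le_div_iff₀ (by positivity), norm_mul, norm_shiftedGaussian]
  calc ‖f x‖ * (Real.exp (B a a / 2) * Real.exp (-(B x x) / 2)) * (1 + ‖x‖) ^ d
      ≤ C * (1 + ‖x‖) ^ k * (Real.exp (B a a / 2) * Real.exp (-(ε / 2 * ‖x‖ ^ 2))) *
          (1 + ‖x‖) ^ d := by gcongr
    _ = C * Real.exp (B a a / 2) * ((1 + ‖x‖) ^ (k + d) * Real.exp (-(ε / 2 * ‖x‖ ^ 2))) := by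
        ring
    _ ≤ C * Real.exp (B a a / 2) * M := by gcongr; exact hM _ (norm_nonneg x)

theorem integral_mul_shiftedGaussian_eq_integral_fderiv (hsymm : B.IsSymm)
    (hpos : ∀ x, x ≠ 0 → 0 < B x x) {f : E → ℂ} (hf : f.HasTemperateGrowth) (a u : E) :
    ∫ x, (B u x + I * B u a) * f x * shiftedGaussian B a x ∂μ =
      ∫ x, fderiv ℝ f x u * shiftedGaussian B a x ∂μ := by
  have hderiv (x : E) : fderiv ℝ (shiftedGaussian B a) x u =
      -((B u x + I * B u a) * shiftedGaussian B a x) := by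
    rw [(hasFDerivAt_shiftedGaussian hsymm a x).fderiv]
    simp [hsymm.eq, mul_comm, mul_add, add_comm]
  have hlin : (fun x => (B u x + I * B u a : ℂ)).HasTemperateGrowth :=
    (Complex.ofRealCLM ∘L (B u).toContinuousLinearMap).hasTemperateGrowth.add (.const _)
  have := integral_mul_fderiv_eq_neg_fderiv_mul_of_integrable (v := u)
    (integrable_mul_shiftedGaussian hsymm hpos (hasTemperateGrowth_fderiv_apply hf u) a)
    ((integrable_mul_shiftedGaussian (μ := μ) hsymm hpos (hf.fun_mul hlin) a).neg.congr
      (.of_forall fun x => by simp [hderiv, mul_assoc]))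
    (integrable_mul_shiftedGaussian hsymm hpos hf a)
    (fun x _ => (hf.1.differentiable (by simp)).differentiableAt)
    (fun x _ => (hasFDerivAt_shiftedGaussian hsymm a x).differentiableAt)
  simp_rw [hderiv, mul_neg, integral_neg, neg_inj] at this
  rw [← this]
  congr 1 with x
  ring

/-- **Wick's theorem**, one contraction at a time. -/
theorem integral_shiftedEval_mul_prod (hsymm : B.IsSymm) (hpos : ∀ x, x ≠ 0 → 0 < B x x)
    {φ : E →ₗ[ℝ] ℂ} {u v : E} (hφ : ∀ x, φ x = B u x + I * B v x) {κ : Type*} [DecidableEq κ]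
    (s : Finset κ) (ψ : κ → E →ₗ[ℝ] ℂ) (a : E) :
    ∫ x, shiftedEval a φ x * (∏ k ∈ s, shiftedEval a (ψ k) x) * shiftedGaussian B a x ∂μ =
      ∑ k ∈ s, (ψ k u + I * ψ k v) *
        ∫ x, (∏ l ∈ s.erase k, shiftedEval a (ψ l) x) * shiftedGaussian B a x ∂μ := by
  have hprod (s : Finset κ) : (fun x => ∏ k ∈ s, shiftedEval a (ψ k) x).HasTemperateGrowth :=
    hasTemperateGrowth_prod s fun k => hasTemperateGrowth_shiftedEval a (ψ k)
  have hint {f : E → ℂ} (hf : f.HasTemperateGrowth) :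
      Integrable (fun x => f x * shiftedGaussian B a x) μ :=
    integrable_mul_shiftedGaussian hsymm hpos hf a
  have hlin (u : E) : (fun x => (B u x + I * B u a : ℂ)).HasTemperateGrowth :=
    (Complex.ofRealCLM ∘L (B u).toContinuousLinearMap).hasTemperateGrowth.add (.const _)
  have hstein (u : E) :
      ∫ x, (B u x + I * B u a) * (∏ k ∈ s, shiftedEval a (ψ k) x) * shiftedGaussian B a x ∂μ =
        ∑ k ∈ s, ψ k u *
          ∫ x, (∏ l ∈ s.erase k, shiftedEval a (ψ l) x) * shiftedGaussian B a x ∂μ := by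
    rw [integral_mul_shiftedGaussian_eq_integral_fderiv hsymm hpos (hprod s)]
    simp_rw [(HasFDerivAt.finsetProd fun k _ => hasFDerivAt_shiftedEval a (ψ k) _).fderiv]
    simp only [sum_apply, smul_apply, LinearMap.coe_toContinuousLinearMap', smul_eq_mul,
      Finset.sum_mul]
    rw [integral_finsetSum _ fun k _ => (hint ((hprod _).fun_mul (.const (ψ k u))))]
    refine Finset.sum_congr rfl fun k _ => ?_
    rw [← integral_const_mul]
    congr 1 with x
    ring
  calc _ = ∫ x, (B u x + I * B u a) * (∏ k ∈ s, shiftedEval a (ψ k) x) * shiftedGaussian B a x +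
        I * ((B v x + I * B v a) * (∏ k ∈ s, shiftedEval a (ψ k) x) *
          shiftedGaussian B a x) ∂μ := by
        congr 1 with x
        rw [shiftedEval, hφ, hφ]
        ring
    _ = _ := by
        rw [integral_add (hint ((hlin u).fun_mul (hprod s)))
          ((hint ((hlin v).fun_mul (hprod s))).const_mul I), integral_const_mul, hstein, hstein,
          Finset.mul_sum, ← Finset.sum_add_distrib]
        exact Finset.sum_congr rfl fun k _ => by ring

end Gaussian

section WickDeterminant

open Equiv (Perm swap)

variable {R : Type*} [Fintype R] [DecidableEq R] {E : Type*} [MeasurableSpace E]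

omit [Fintype R] in
lemma mul_swap_apply_of_notMem {S : Finset R} {x z y : R} (hx : x ∈ S) (hz : z ∈ S) (hy : y ∉ S)
    (σ : Perm R) : (σ * swap x z) y = σ y := by
  rw [Perm.mul_apply, Equiv.swap_apply_of_ne_of_ne (ne_of_mem_of_not_mem hx hy).symm
    (ne_of_mem_of_not_mem hz hy).symm]

lemma det_add_eq_sum_powerset (A Z : Matrix R R ℂ) :
    (A + Z).det = ∑ S : Finset R, ∑ σ : Perm R,
      ((Perm.sign σ : ℤ) * ∏ x ∈ Sᶜ, A x (σ x)) * ∏ x ∈ S, Z x (σ x) := by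
  rw [← Matrix.det_transpose, Matrix.det_apply', Finset.sum_comm]
  refine Finset.sum_congr rfl fun σ _ => ?_
  simp only [Matrix.transpose_apply, Matrix.add_apply, add_comm (A _ _), Finset.prod_add,
    Finset.mul_sum, Finset.powerset_univ, ← Finset.compl_eq_univ_sdiff]
  exact Finset.sum_congr rfl fun S _ => by ring

/-- The moment `∫ (∏_{x ∈ S} Z_{x,σ(x)}) w dμ` of the entries of a random matrix `Z` under the
complex weight `w`. -/
noncomputable def entryMoment (μ : Measure E) (w : E → ℂ) (Z : E → Matrix R R ℂ)
    (S : Finset R) (σ : R → R) : ℂ :=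
  ∫ v, (∏ x ∈ S, Z v x (σ x)) * w v ∂μ

omit [Fintype R] [DecidableEq R] in
lemma entryMoment_congr {μ : Measure E} {w : E → ℂ} {Z : E → Matrix R R ℂ} {S : Finset R}
    {σ τ : R → R} (h : ∀ x ∈ S, σ x = τ x) : entryMoment μ w Z S σ = entryMoment μ w Z S τ := by
  unfold entryMoment
  congr! 3 with v
  exact Finset.prod_congr rfl fun x hx => by rw [h x hx]

omit [Fintype R] [DecidableEq R] in
lemma entryMoment_empty (μ : Measure E) (w : E → ℂ) (Z : E → Matrix R R ℂ) (σ : R → R) :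
    entryMoment μ w Z ∅ σ = ∫ v, w v ∂μ := by
  simp only [entryMoment, Finset.prod_empty, one_mul]

/-- The entries of `Z` behave under the complex weight `w` like centered Gaussians with
`E Z_{xy} Z_{zw} = C x y z w`: products of entries in distinct rows have moments, and these obey
Wick's recursion. -/
structure IsWickMatrix (μ : Measure E) (w : E → ℂ) (Z : E → Matrix R R ℂ)
    (C : R → R → R → R → ℂ) : Prop where
  integrable_prod (S : Finset R) (σ : R → R) :
    Integrable (fun v => (∏ x ∈ S, Z v x (σ x)) * w v) μ
  entryMoment_insert {S : Finset R} {x : R} (hx : x ∉ S) (σ : R → R) :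
    entryMoment μ w Z (insert x S) σ =
      ∑ z ∈ S, C x (σ x) z (σ z) * entryMoment μ w Z (S.erase z) σ

namespace IsWickMatrix

variable {μ : Measure E} {w : E → ℂ} {Z : E → Matrix R R ℂ} {C : R → R → R → R → ℂ}

lemma integrable_det_add (hZ : IsWickMatrix μ w Z C) (A : Matrix R R ℂ) :
    Integrable (fun v => (A + Z v).det * w v) μ := by
  simp only [det_add_eq_sum_powerset, Finset.sum_mul, mul_assoc]
  exact integrable_finsetSum _ fun S _ => integrable_finsetSum _ fun σ _ =>
    ((hZ.integrable_prod S σ).const_mul _).const_mul _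

lemma integral_det_add (hZ : IsWickMatrix μ w Z C) (A : Matrix R R ℂ) :
    ∫ v, (A + Z v).det * w v ∂μ = ∑ S : Finset R, ∑ σ : Perm R,
      ((Perm.sign σ : ℤ) * ∏ x ∈ Sᶜ, A x (σ x)) * entryMoment μ w Z S σ := by
  simp only [det_add_eq_sum_powerset, Finset.sum_mul, mul_assoc _ (∏ x ∈ _, Z _ x _)]
  have hint (S : Finset R) (σ : Perm R) := (hZ.integrable_prod S σ).const_mul
    ((Perm.sign σ : ℤ) * ∏ x ∈ Sᶜ, A x (σ x))
  rw [integral_finsetSum _ fun S _ => integrable_finsetSum _ fun σ _ => hint S σ]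
  refine Finset.sum_congr rfl fun S _ => ?_
  rw [integral_finsetSum _ fun σ _ => hint S σ]
  exact Finset.sum_congr rfl fun σ _ => integral_const_mul _ _

variable {E' : Type*} [MeasurableSpace E'] {μ' : Measure E'} {w' : E' → ℂ}
  {Z' : E' → Matrix R R ℂ} {C' : R → R → R → R → ℂ}

-- Contracting the rows `x` and `z`, the substitution `σ ↦ σ * swap x z` exchanges their columns:
-- this turns `C` into `-C'`, and the sign is absorbed by the antisymmetry of `f`.
lemma sum_entryMoment_eq (hZ : IsWickMatrix μ w Z C) (hZ' : IsWickMatrix μ' w' Z' C')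
    (hC : ∀ x y z t, C x y z t = -C' x t z y) (S : Finset R) (f : Perm R → ℂ)
    (hf : ∀ x ∈ S, ∀ z ∈ S, x ≠ z → ∀ σ, f (σ * swap x z) = -f σ) :
    (∫ v, w' v ∂μ') * ∑ σ : Perm R, f σ * entryMoment μ w Z S σ =
      (∫ v, w v ∂μ) * ∑ σ : Perm R, f σ * entryMoment μ' w' Z' S σ := by
  induction S using Finset.strongInduction generalizing f with | _ S ih => ?_
  rcases S.eq_empty_or_nonempty with rfl | ⟨x, hxS⟩
  · simp only [entryMoment_empty, ← Finset.sum_mul]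
    ring
  obtain ⟨T, hxT, rfl⟩ : ∃ T, x ∉ T ∧ insert x T = S :=
    ⟨S.erase x, S.notMem_erase x, Finset.insert_erase hxS⟩
  simp only [hZ.entryMoment_insert hxT, hZ'.entryMoment_insert hxT, Finset.mul_sum (s := T)]
  simp_rw [Finset.sum_comm (s := (Finset.univ : Finset (Perm R))), Finset.mul_sum (s := T)]
  refine Finset.sum_congr rfl fun z hz => ?_
  have hxU : x ∉ T.erase z := fun h => hxT (Finset.mem_of_mem_erase h)
  have hxz : x ≠ z := fun h => hxT (h ▸ hz)
  have hUT : T.erase z ⊆ insert x T := (T.erase_subset z).trans (T.subset_insert x)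
  have hcontract := ih (T.erase z) ((T.erase_ssubset hz).trans_subset (T.subset_insert x))
    (fun σ => f σ * C x (σ x) z (σ z)) fun p hp q hq hpq σ => by
      rw [mul_swap_apply_of_notMem hp hq hxU, mul_swap_apply_of_notMem hp hq (T.notMem_erase z),
        hf p (hUT hp) q (hUT hq) hpq, neg_mul]
  simp only [← mul_assoc]
  rw [hcontract]
  refine congrArg _ (Fintype.sum_equiv (Equiv.mulRight (swap x z)) _ _ fun σ => ?_)
  have hmoment : entryMoment μ' w' Z' (T.erase z) (σ * swap x z) =
      entryMoment μ' w' Z' (T.erase z) σ := entryMoment_congr fun y hy => by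
    rw [Perm.mul_apply, Equiv.swap_apply_of_ne_of_ne (ne_of_mem_of_not_mem hy hxU)
      (Finset.ne_of_mem_erase hy)]
  rw [Equiv.coe_mulRight, hmoment, hf x hxS z (Finset.mem_insert_of_mem hz) hxz, hC]
  simp only [Perm.mul_apply, Equiv.swap_apply_left, Equiv.swap_apply_right]
  ring

theorem integral_det_add_eq (hZ : IsWickMatrix μ w Z C) (hZ' : IsWickMatrix μ' w' Z' C')
    (hC : ∀ x y z t, C x y z t = -C' x t z y) (A : Matrix R R ℂ) :
    (∫ v, w' v ∂μ') * ∫ v, (A + Z v).det * w v ∂μ =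
      (∫ v, w v ∂μ) * ∫ v, (A + Z' v).det * w' v ∂μ' := by
  rw [hZ.integral_det_add, hZ'.integral_det_add, Finset.mul_sum, Finset.mul_sum]
  refine Finset.sum_congr rfl fun S _ => hZ.sum_entryMoment_eq hZ' hC S _ fun x hx z hz hxz σ => ?_
  have hprod : ∏ y ∈ Sᶜ, A y ((σ * swap x z) y) = ∏ y ∈ Sᶜ, A y (σ y) :=
    Finset.prod_congr rfl fun y hy => by
      rw [mul_swap_apply_of_notMem hx hz (Finset.mem_compl.mp hy)]
  rw [hprod, Perm.sign_mul, Perm.sign_swap hxz]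
  simp

end IsWickMatrix

omit [Fintype R] in
lemma isWickMatrix_shiftedEval {V : Type*} [NormedAddCommGroup V] [NormedSpace ℝ V]
    [FiniteDimensional ℝ V] [MeasurableSpace V] [BorelSpace V] (μ : Measure V) [μ.IsAddHaarMeasure]
    {B : LinearMap.BilinForm ℝ V} (hsymm : B.IsSymm) (hpos : ∀ x, x ≠ 0 → 0 < B x x) (a : V)
    {φ : R → R → V →ₗ[ℝ] ℂ} {u v : R → R → V}
    (hφ : ∀ x y t, φ x y t = B (u x y) t + Complex.I * B (v x y) t) :
    IsWickMatrix μ (shiftedGaussian B a) (fun t => Matrix.of fun x y => shiftedEval a (φ x y) t)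
      fun x y z w => φ z w (u x y) + Complex.I * φ z w (v x y) where
  integrable_prod S σ := integrable_mul_shiftedGaussian hsymm hpos
    (hasTemperateGrowth_prod S fun x => hasTemperateGrowth_shiftedEval a (φ x (σ x))) a
  entryMoment_insert hx σ := by
    simp only [entryMoment, Finset.prod_insert hx, Matrix.of_apply]
    exact integral_shiftedEval_mul_prod hsymm hpos (hφ _ _) _ (fun z => φ z (σ z)) a

end WickDeterminant

section HermitianMatrices

open Complex (I)
open scoped ComplexConjugate ComplexStarModule Matrix

/-- Independent real coordinates of a Hermitian matrix: the diagonal, and the real and imaginary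
parts above it. -/
abbrev HermCoords (ι : Type*) [LT ι] : Type _ := (ι → ℝ) × ({q : ι × ι // q.1 < q.2} → ℝ × ℝ)

variable {ι : Type*} [LinearOrder ι]

/-- The Hermitian matrix with given coordinates; `bandH n d o` is `hermOfCoords (d, o)`. -/
noncomputable def hermOfCoords : HermCoords ι →ₗ[ℝ] Matrix ι ι ℂ where
  toFun v := Matrix.of fun i j =>
    if h : i < j then ⟨(v.2 ⟨(i, j), h⟩).1, (v.2 ⟨(i, j), h⟩).2⟩
    else if h' : j < i then ⟨(v.2 ⟨(j, i), h'⟩).1, -((v.2 ⟨(j, i), h'⟩).2)⟩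
    else ((v.1 i : ℝ) : ℂ)
  map_add' v w := by
    ext i j
    simp only [Matrix.of_apply, Matrix.add_apply]
    split_ifs <;> apply Complex.ext <;> simp [add_comm]
  map_smul' c v := by
    ext i j
    simp only [Matrix.of_apply, Matrix.smul_apply]
    split_ifs <;> apply Complex.ext <;> simp

lemma hermOfCoords_apply_of_lt (v : HermCoords ι) {i j : ι} (h : i < j) :
    hermOfCoords v i j = ⟨(v.2 ⟨(i, j), h⟩).1, (v.2 ⟨(i, j), h⟩).2⟩ :=
  dif_pos h

lemma hermOfCoords_apply_self (v : HermCoords ι) (i : ι) : hermOfCoords v i i = v.1 i := by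
  simp [hermOfCoords]

lemma star_hermOfCoords_apply (v : HermCoords ι) (i j : ι) :
    conj (hermOfCoords v i j) = hermOfCoords v j i := by
  rcases lt_trichotomy i j with h | rfl | h
  · simp [hermOfCoords, h, h.not_gt, Complex.ext_iff]
  · simp [hermOfCoords_apply_self]
  · simp [hermOfCoords, h, h.not_gt, Complex.ext_iff]

lemma exists_hermOfCoords_eq {M : Matrix ι ι ℂ} (hM : M.IsHermitian) : ∃ v, hermOfCoords v = M := by
  refine ⟨(fun i => (M i i).re, fun q => ((M q.1.1 q.1.2).re, (M q.1.1 q.1.2).im)), ?_⟩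
  ext i j
  rcases lt_trichotomy i j with h | rfl | h
  · simp [hermOfCoords_apply_of_lt _ h]
  · rw [hermOfCoords_apply_self]
    exact Complex.conj_eq_iff_re.mp (hM.apply i i)
  · rw [← star_hermOfCoords_apply, hermOfCoords_apply_of_lt _ h, ← hM.apply]
    rfl

lemma hermOfCoords_injective : Function.Injective (hermOfCoords : HermCoords ι → Matrix ι ι ℂ) := by
  intro v w h
  refine Prod.ext (funext fun i => ?_) (funext fun q => ?_)
  · simpa [hermOfCoords_apply_self] using congrFun₂ h i i
  · simpa [hermOfCoords_apply_of_lt _ q.2, Complex.ext_iff, Prod.ext_iff] using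
      congrFun₂ h q.1.1 q.1.2

lemma re_hermOfCoords_mul_self (v : HermCoords ι) (i j : ι) :
    (hermOfCoords v i j * hermOfCoords v j i).re = ‖hermOfCoords v i j‖ ^ 2 := by
  rw [← star_hermOfCoords_apply v i j, Complex.mul_conj']
  norm_cast

variable [Fintype ι]

instance isAddHaarMeasure_volume_hermCoords :
    (volume : Measure (HermCoords ι)).IsAddHaarMeasure :=
  have : (volume : Measure (ℝ × ℝ)).IsAddHaarMeasure :=
    Measure.prod.instIsAddHaarMeasure volume volume
  Measure.prod.instIsAddHaarMeasure volume volume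

lemma sum_sum_eq_sum_diag_add_sum_lt {M : Type*} [AddCommMonoid M] (f : ι → ι → M) :
    ∑ i, ∑ j, f i j = ∑ i, f i i +
      ∑ q : {q : ι × ι // q.1 < q.2}, (f q.1.1 q.1.2 + f q.1.2 q.1.1) := by
  have hlt (g : ι × ι → M) : ∑ q : {q : ι × ι // q.1 < q.2}, g q = ∑ q with q.1 < q.2, g q :=
    (Finset.sum_subtype _ (by simp) g).symm
  have hsplit (i j : ι) : f i j = (if i = j then f i j else 0) +
      ((if i < j then f i j else 0) + if j < i then f i j else 0) := by
    rcases lt_trichotomy i j with h | rfl | h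
    · simp [h, h.ne, h.not_gt]
    · simp
    · simp [h, h.ne', h.not_gt]
  simp_rw [Finset.sum_add_distrib, hlt fun q => f q.1 q.2, hlt fun q => f q.2 q.1,
    Finset.sum_filter, Fintype.sum_prod_type]
  conv_lhs => enter [2, i, 2, j]; rw [hsplit]
  simp only [Finset.sum_add_distrib, Finset.sum_ite_eq, Finset.mem_univ, if_true]
  rw [Finset.sum_comm (f := fun i j => if j < i then f i j else 0)]

variable (J : Matrix ι ι ℝ)

/-- The inner product `∑ᵢⱼ Re(Hᵢⱼ H'ⱼᵢ) / Jᵢⱼ` on Hermitian matrices, whose Gaussian weight is,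
up to normalisation, the density of the ensemble with variances `E|Hᵢⱼ|² = Jᵢⱼ`. -/
noncomputable def varianceForm : LinearMap.BilinForm ℝ (HermCoords ι) :=
  LinearMap.mk₂ ℝ (fun v w =>
      ∑ i, ∑ j, (J i j)⁻¹ * (hermOfCoords v i j * hermOfCoords w j i).re)
    (by simp [add_mul, mul_add, Finset.sum_add_distrib])
    (by simp [mul_assoc, mul_left_comm, Finset.mul_sum])
    (by simp [mul_add, Finset.sum_add_distrib])
    (by simp [mul_left_comm, Finset.mul_sum])

lemma varianceForm_apply (v w : HermCoords ι) : varianceForm J v w =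
    ∑ i, ∑ j, (J i j)⁻¹ * (hermOfCoords v i j * hermOfCoords w j i).re := rfl

lemma varianceForm_isSymm : (varianceForm J).IsSymm := by
  refine ⟨fun v w => ?_⟩
  have hterm (i j : ι) : (hermOfCoords v i j * hermOfCoords w j i).re =
      (hermOfCoords w i j * hermOfCoords v j i).re := by
    rw [← Complex.conj_re, map_mul, star_hermOfCoords_apply, star_hermOfCoords_apply, mul_comm]
  simp only [varianceForm_apply, hterm]

variable {J}

lemma varianceForm_pos (hJ : ∀ i j, 0 < J i j) {v : HermCoords ι} (hv : v ≠ 0) :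
    0 < varianceForm J v v := by
  have hterm (i j : ι) :
      (J i j)⁻¹ * (hermOfCoords v i j * hermOfCoords v j i).re =
        (J i j)⁻¹ * ‖hermOfCoords v i j‖ ^ 2 := by
    rw [re_hermOfCoords_mul_self]
  obtain ⟨i, j, hij⟩ : ∃ i j, hermOfCoords v i j ≠ 0 := by
    by_contra! h
    exact hv (hermOfCoords_injective (by ext i j; simp [h i j]))
  have hnonneg (i j : ι) : 0 ≤ (J i j)⁻¹ * ‖hermOfCoords v i j‖ ^ 2 :=
    mul_nonneg (inv_pos.mpr (hJ i j)).le (sq_nonneg _)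
  simp only [varianceForm_apply, hterm]
  refine Finset.sum_pos' (fun i _ => Finset.sum_nonneg fun j _ => hnonneg i j)
    ⟨i, Finset.mem_univ i, Finset.sum_pos' (fun j _ => hnonneg i j) ⟨j, Finset.mem_univ j, ?_⟩⟩
  have := hJ i j
  positivity

lemma ofReal_varianceForm (hJ : J.IsSymm) (v w : HermCoords ι) : (varianceForm J v w : ℂ) =
    ∑ i, ∑ j, ((J i j)⁻¹ : ℂ) * (hermOfCoords v i j * hermOfCoords w j i) := by
  have hconj : conj (∑ i, ∑ j, ((J i j)⁻¹ : ℂ) * (hermOfCoords v i j * hermOfCoords w j i)) =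
      ∑ i, ∑ j, ((J i j)⁻¹ : ℂ) * (hermOfCoords v i j * hermOfCoords w j i) := by
    simp only [map_sum, map_mul, map_inv₀, Complex.conj_ofReal, star_hermOfCoords_apply]
    rw [Finset.sum_comm]
    exact Finset.sum_congr rfl fun j _ => Finset.sum_congr rfl fun i _ => by rw [hJ.apply]
  rw [← Complex.conj_eq_iff_re.mp hconj]
  simp [varianceForm_apply, ← Complex.ofReal_inv]

lemma exists_varianceForm_add_I_mul_eq (hJ : J.IsSymm) (M : Matrix ι ι ℂ) :
    ∃ u v : HermCoords ι, hermOfCoords u + I • hermOfCoords v = M ∧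
      ∀ x, (varianceForm J u x + I * varianceForm J v x : ℂ) =
        ∑ i, ∑ j, ((J i j)⁻¹ : ℂ) * (M i j * hermOfCoords x j i) := by
  obtain ⟨u, hu⟩ := exists_hermOfCoords_eq (ℜ M).2
  obtain ⟨v, hv⟩ := exists_hermOfCoords_eq (ℑ M).2
  have hM : hermOfCoords u + I • hermOfCoords v = M := by
    rw [hu, hv, realPart_add_I_smul_imaginaryPart]
  refine ⟨u, v, hM, fun x => ?_⟩
  rw [ofReal_varianceForm hJ, ofReal_varianceForm hJ, ← hM]
  simp only [Finset.mul_sum, ← Finset.sum_add_distrib, Matrix.add_apply, Matrix.smul_apply,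
    smul_eq_mul]
  exact Finset.sum_congr rfl fun i _ => Finset.sum_congr rfl fun j _ => by ring

variable (J) in
/-- The law of the band ensemble with variances `E|Hᵢⱼ|² = Jᵢⱼ`, as a density in the independent
coordinates; `bandDens n W d o` is `hermDensity (Jmat n W) (d, o)`. -/
noncomputable def hermDensity (v : HermCoords ι) : ℝ :=
  (∏ i, (Real.sqrt (2 * Real.pi * J i i))⁻¹ * Real.exp (-(v.1 i) ^ 2 / (2 * J i i))) *
  ∏ q : {q : ι × ι // q.1 < q.2}, (Real.pi * J q.1.1 q.1.2)⁻¹ *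
    Real.exp (-((v.2 q).1 ^ 2 + (v.2 q).2 ^ 2) / J q.1.1 q.1.2)

lemma hermDensity_eq_mul_exp (hJ : J.IsSymm) (v : HermCoords ι) :
    hermDensity J v = hermDensity J 0 * Real.exp (-(varianceForm J v v) / 2) := by
  have hform : varianceForm J v v = ∑ i, (J i i)⁻¹ * v.1 i ^ 2 +
      ∑ q : {q : ι × ι // q.1 < q.2},
        2 * ((J q.1.1 q.1.2)⁻¹ * ((v.2 q).1 ^ 2 + (v.2 q).2 ^ 2)) := by
    rw [varianceForm_apply, sum_sum_eq_sum_diag_add_sum_lt]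
    congr! 2 with i _ q
    · simp [hermOfCoords_apply_self, sq]
    · rw [hJ.apply, mul_comm (hermOfCoords v q.1.2 _), ← two_mul, re_hermOfCoords_mul_self,
        hermOfCoords_apply_of_lt v q.2, Complex.sq_norm, Complex.normSq_mk]
      ring
  have hdiag : Real.exp (-(∑ i, (J i i)⁻¹ * v.1 i ^ 2) / 2) =
      ∏ i, Real.exp (-(v.1 i) ^ 2 / (2 * J i i)) := by
    rw [← Real.exp_sum, ← Finset.sum_neg_distrib, Finset.sum_div]
    exact congrArg _ (Finset.sum_congr rfl fun i _ => by ring)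
  have hupper : Real.exp (-(∑ q : {q : ι × ι // q.1 < q.2},
        2 * ((J q.1.1 q.1.2)⁻¹ * ((v.2 q).1 ^ 2 + (v.2 q).2 ^ 2))) / 2) =
      ∏ q : {q : ι × ι // q.1 < q.2},
        Real.exp (-((v.2 q).1 ^ 2 + (v.2 q).2 ^ 2) / J q.1.1 q.1.2) := by
    rw [← Real.exp_sum, ← Finset.sum_neg_distrib, Finset.sum_div]
    exact congrArg _ (Finset.sum_congr rfl fun i _ => by ring)
  rw [hform, neg_add, add_div, Real.exp_add, hdiag, hupper]
  simp only [hermDensity, Finset.prod_mul_distrib, Prod.fst_zero, Prod.snd_zero, Pi.zero_apply]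
  simp only [ne_eq, OfNat.ofNat_ne_zero, not_false_eq_true, zero_pow, add_zero, neg_zero, zero_div,
    Real.exp_zero, Finset.prod_const_one, mul_one]
  ring

lemma integral_gaussian_variance {σ : ℝ} (hσ : 0 < σ) :
    ∫ x : ℝ, (Real.sqrt (2 * Real.pi * σ))⁻¹ * Real.exp (-x ^ 2 / (2 * σ)) = 1 := by
  have hexp (x : ℝ) : -x ^ 2 / (2 * σ) = -(2 * σ)⁻¹ * x ^ 2 := by ring
  simp_rw [integral_const_mul, hexp, integral_gaussian, div_inv_eq_mul, ← mul_assoc,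
    mul_comm Real.pi]
  exact inv_mul_cancel₀ (by positivity)

lemma integral_complex_gaussian_variance {σ : ℝ} (hσ : 0 < σ) :
    ∫ x : ℝ × ℝ, (Real.pi * σ)⁻¹ * Real.exp (-(x.1 ^ 2 + x.2 ^ 2) / σ) = 1 := by
  have hexp (x : ℝ × ℝ) : Real.exp (-(x.1 ^ 2 + x.2 ^ 2) / σ) =
      Real.exp (-σ⁻¹ * x.1 ^ 2) * Real.exp (-σ⁻¹ * x.2 ^ 2) := by
    rw [← Real.exp_add]
    ring_nf
  simp_rw [integral_const_mul, hexp]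
  rw [Measure.volume_eq_prod, integral_prod_mul (fun x : ℝ => Real.exp (-σ⁻¹ * x ^ 2))
    (fun x : ℝ => Real.exp (-σ⁻¹ * x ^ 2)), integral_gaussian, Real.mul_self_sqrt (by positivity),
    div_inv_eq_mul]
  exact inv_mul_cancel₀ (by positivity)

lemma integral_hermDensity (hJ : ∀ i j, 0 < J i j) : ∫ v, hermDensity J v = 1 := by
  simp only [hermDensity]
  rw [Measure.volume_eq_prod, integral_prod_mul
    (fun d : ι → ℝ => ∏ i, (Real.sqrt (2 * Real.pi * J i i))⁻¹ *
      Real.exp (-(d i) ^ 2 / (2 * J i i)))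
    (fun o : {q : ι × ι // q.1 < q.2} → ℝ × ℝ => ∏ q, (Real.pi * J q.1.1 q.1.2)⁻¹ *
      Real.exp (-((o q).1 ^ 2 + (o q).2 ^ 2) / J q.1.1 q.1.2)),
    integral_fintype_prod_volume_eq_prod fun i x => (Real.sqrt (2 * Real.pi * J i i))⁻¹ *
      Real.exp (-x ^ 2 / (2 * J i i)),
    integral_fintype_prod_volume_eq_prod fun (q : {q : ι × ι // q.1 < q.2}) (x : ℝ × ℝ) =>
      (Real.pi * J q.1.1 q.1.2)⁻¹ * Real.exp (-(x.1 ^ 2 + x.2 ^ 2) / J q.1.1 q.1.2)]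
  simp only [integral_gaussian_variance (hJ _ _), integral_complex_gaussian_variance (hJ _ _),
    Finset.prod_const_one, mul_one]

lemma ofReal_hermDensity (hJ : J.IsSymm) (v : HermCoords ι) :
    (hermDensity J v : ℂ) = hermDensity J 0 * shiftedGaussian (varianceForm J) 0 v := by
  simp [hermDensity_eq_mul_exp hJ v, shiftedGaussian]

lemma integral_hermDensity_mul (hJ : J.IsSymm) (f : HermCoords ι → ℂ) :
    ∫ v, (hermDensity J v : ℂ) * f v =
      hermDensity J 0 * ∫ v, f v * shiftedGaussian (varianceForm J) 0 v := by
  rw [← integral_const_mul]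
  congr 1 with v
  rw [ofReal_hermDensity hJ v]
  ring

lemma hermDensity_zero_mul_integral_shiftedGaussian (hsymm : J.IsSymm) (hJ : ∀ i j, 0 < J i j) :
    (hermDensity J 0 : ℂ) * ∫ v, shiftedGaussian (varianceForm J) 0 v = 1 := by
  rw [← integral_const_mul]
  simp_rw [← ofReal_hermDensity hsymm, integral_complex_ofReal, integral_hermDensity hJ,
    Complex.ofReal_one]

variable {β : Type*} [DecidableEq β]

/-- The entries of `-(H ⊗ 1)` as linear functionals of the coordinates of `H`. -/
noncomputable def negBlockEntry (x y : ι × β) : HermCoords ι →ₗ[ℝ] ℂ :=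
  LinearMap.mulLeft ℝ (if x.2 = y.2 then -1 else 0) ∘ₗ
    Matrix.entryLinearMap ℝ ℂ x.1 y.1 ∘ₗ hermOfCoords

omit [Fintype ι] in
lemma negBlockEntry_apply (x y : ι × β) (v : HermCoords ι) :
    negBlockEntry x y v = if x.2 = y.2 then -hermOfCoords v x.1 y.1 else 0 := by
  simp [negBlockEntry]

lemma isWickMatrix_neg_blockDiagonal_hermOfCoords (hsymm : J.IsSymm) (hJ : ∀ i j, 0 < J i j) :
    IsWickMatrix volume (shiftedGaussian (varianceForm J) 0)
      (fun v => -Matrix.blockDiagonal fun _ : β => hermOfCoords v)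
      fun x y z w =>
        if x.2 = y.2 ∧ z.2 = w.2 ∧ y.1 = z.1 ∧ x.1 = w.1 then (J x.1 y.1 : ℂ) else 0 := by
  choose u v huv hrep using fun x y : ι × β => exists_varianceForm_add_I_mul_eq hsymm
    (Matrix.single y.1 x.1 (if x.2 = y.2 then -(J x.1 y.1 : ℂ) else 0))
  have hentry (x y : ι × β) (t : HermCoords ι) :
      negBlockEntry x y t = varianceForm J (u x y) t + I * varianceForm J (v x y) t := by
    have hne : (J x.1 y.1 : ℂ) ≠ 0 := by exact_mod_cast (hJ _ _).ne'
    simp only [hrep, negBlockEntry_apply, Matrix.single_apply, ite_and, ite_mul, mul_ite, zero_mul,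
      mul_zero, Finset.sum_ite_eq, Finset.mem_univ, if_true, Finset.sum_ite_irrel,
      Finset.sum_const_zero, hsymm.apply x.1 y.1]
    split_ifs
    · field_simp
    · rfl
  have hcov (x y z w : ι × β) : negBlockEntry z w (u x y) + I * negBlockEntry z w (v x y) =
      if x.2 = y.2 ∧ z.2 = w.2 ∧ y.1 = z.1 ∧ x.1 = w.1 then (J x.1 y.1 : ℂ) else 0 := by
    have huv' := congrFun₂ (huv x y) z.1 w.1
    simp only [Matrix.add_apply, Matrix.smul_apply, smul_eq_mul, Matrix.single_apply] at huv'
    have hfactor : negBlockEntry z w (u x y) + I * negBlockEntry z w (v x y) =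
        if z.2 = w.2 then -(hermOfCoords (u x y) z.1 w.1 + I * hermOfCoords (v x y) z.1 w.1)
        else 0 := by
      simp only [negBlockEntry_apply]
      split_ifs <;> ring
    rw [hfactor, huv']
    by_cases hz : z.2 = w.2 <;> by_cases hx : x.2 = y.2 <;> simp [hz, hx, neg_ite]
  convert isWickMatrix_shiftedEval volume (varianceForm_isSymm J) (fun _ => varianceForm_pos hJ) 0
    hentry using 1
  · ext t x y
    simp only [Matrix.of_apply, shiftedEval_zero, negBlockEntry_apply, Matrix.neg_apply,
      Matrix.blockDiagonal_apply]
    split_ifs <;> simp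
  · simp only [hcov]

lemma det_diagonal_add_neg_blockDiagonal [Fintype β] (l : β → ℂ) (M : Matrix ι ι ℂ) :
    (Matrix.diagonal (fun x : ι × β => l x.2) + -Matrix.blockDiagonal fun _ => M).det =
      ∏ b, (l b • 1 - M).det := by
  have hdiag : Matrix.diagonal (fun x : ι × β => l x.2) =
      Matrix.blockDiagonal fun b => l b • (1 : Matrix ι ι ℂ) := by
    simp [← Matrix.diagonal_one, ← Matrix.diagonal_smul]
  rw [hdiag, ← sub_eq_add_neg, ← Matrix.blockDiagonal_sub, Matrix.det_blockDiagonal]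
  rfl

end HermitianMatrices

section HermitianTwoByTwo

open Complex (I)
open scoped ComplexConjugate ComplexStarModule Matrix Kronecker

lemma herm2_add (x y : Fin 4 → ℝ) : herm2 (x + y) = herm2 x + herm2 y := by
  ext i j
  fin_cases i <;> fin_cases j <;> simp [herm2, Complex.ext_iff, add_comm]

lemma herm2_smul (c : ℝ) (x : Fin 4 → ℝ) : herm2 (c • x) = c • herm2 x := by
  ext i j
  fin_cases i <;> fin_cases j <;> simp [herm2, Complex.ext_iff]

lemma exists_herm2_eq {M : Matrix (Fin 2) (Fin 2) ℂ} (hM : M.IsHermitian) : ∃ x, herm2 x = M := by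
  refine ⟨![(M 0 0).re, (M 1 1).re, (M 0 1).re, (M 0 1).im], ?_⟩
  ext i j
  fin_cases i <;> fin_cases j
  · exact Complex.conj_eq_iff_re.mp (hM.apply 0 0)
  · rfl
  · exact hM.apply 1 0
  · exact Complex.conj_eq_iff_re.mp (hM.apply 1 1)

/-- The weights `w` with `Tr (herm2 x)² = ∑ (w_c x_c)²`. -/
noncomputable def traceWeight : Fin 4 → ℝ := ![1, 1, Real.sqrt 2, Real.sqrt 2]

lemma trace_herm2_mul_herm2 (x y : Fin 4 → ℝ) : (herm2 x * herm2 y).trace =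
    ((∑ c, (traceWeight c * x c) * (traceWeight c * y c) : ℝ) : ℂ) := by
  have hsqrt : (Real.sqrt 2 : ℂ) ^ 2 = 2 := by norm_cast; exact Real.sq_sqrt zero_le_two
  simp only [herm2, traceWeight, Matrix.trace_fin_two, Matrix.mul_apply, Fin.sum_univ_four,
    Fin.sum_univ_two, Complex.mk_eq_add_mul_I]
  push_cast
  simp only [Matrix.of_apply, Matrix.cons_val', Matrix.cons_val_zero, Matrix.cons_val_fin_one,
    Matrix.cons_val_one, one_mul]
  linear_combination (-2) * (x 3 : ℂ) * y 3 * Complex.I_sq - (x 2 * y 2 + x 3 * y 3 : ℂ) * hsqrt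

variable {ι : Type*} [Fintype ι]

/-- The form `∑ⱼₖ Kⱼₖ Tr XⱼX'ₖ` on families of `2 × 2` Hermitian matrices. -/
noncomputable def traceForm (K : Matrix ι ι ℝ) : LinearMap.BilinForm ℝ (ι → Fin 4 → ℝ) :=
  LinearMap.mk₂ ℝ (fun t t' => ∑ j, ∑ k, K j k * (herm2 (t j) * herm2 (t' k)).trace.re)
    (by simp [herm2_add, add_mul, mul_add, Finset.sum_add_distrib])
    (by simp [herm2_smul, mul_left_comm, Finset.mul_sum])
    (by simp [herm2_add, mul_add, Finset.sum_add_distrib])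
    (by simp [herm2_smul, mul_left_comm, Finset.mul_sum])

lemma ofReal_traceForm (K : Matrix ι ι ℝ) (t t' : ι → Fin 4 → ℝ) : (traceForm K t t' : ℂ) =
    ∑ j, ∑ k, (K j k : ℂ) * (herm2 (t j) * herm2 (t' k)).trace := by
  simp only [traceForm, LinearMap.mk₂_apply, trace_herm2_mul_herm2, Complex.ofReal_re]
  push_cast
  rfl

lemma traceForm_eq_sum_dotProduct (K : Matrix ι ι ℝ) (t t' : ι → Fin 4 → ℝ) : traceForm K t t' =
    ∑ c, (fun j => traceWeight c * t j c) ⬝ᵥ K *ᵥ fun k => traceWeight c * t' k c := by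
  simp only [traceForm, LinearMap.mk₂_apply, trace_herm2_mul_herm2, Complex.ofReal_re, dotProduct,
    Matrix.mulVec, Finset.mul_sum]
  rw [Finset.sum_comm (s := (Finset.univ : Finset (Fin 4)))]
  refine Finset.sum_congr rfl fun j _ => ?_
  rw [Finset.sum_comm]
  exact Finset.sum_congr rfl fun c _ => Finset.sum_congr rfl fun k _ => by ring

lemma traceForm_isSymm {K : Matrix ι ι ℝ} (hK : K.IsSymm) : (traceForm K).IsSymm := by
  refine ⟨fun t t' => ?_⟩
  simp only [traceForm_eq_sum_dotProduct]
  exact Finset.sum_congr rfl fun c _ => by rw [← Matrix.dotProduct_transpose_mulVec, hK.eq]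

lemma traceForm_pos {K : Matrix ι ι ℝ} (hK : K.PosDef) {t : ι → Fin 4 → ℝ} (ht : t ≠ 0) :
    0 < traceForm K t t := by
  have hweight (c : Fin 4) : traceWeight c ≠ 0 := by
    fin_cases c <;> simp [traceWeight]
  obtain ⟨j, c, hjc⟩ : ∃ j c, t j c ≠ 0 := by
    by_contra! h
    exact ht (funext₂ h)
  rw [traceForm_eq_sum_dotProduct]
  refine Finset.sum_pos' (fun c _ => hK.posSemidef.dotProduct_mulVec_nonneg _)
    ⟨c, Finset.mem_univ c, hK.dotProduct_mulVec_pos fun h => ?_⟩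
  exact mul_ne_zero (hweight c) hjc (congrFun h j)

variable [DecidableEq ι]

/-- The coordinates in which `traceForm (Sᵀ * S)` is the standard inner product. -/
noncomputable def traceCoords (S : Matrix ι ι ℝ) : (ι → Fin 4 → ℝ) →ₗ[ℝ] (ι → Fin 4 → ℝ) :=
  (LinearEquiv.curry ℝ ℝ ι (Fin 4)).conj (Matrix.toLin' (S ⊗ₖ Matrix.diagonal traceWeight))

lemma traceCoords_apply (S : Matrix ι ι ℝ) (t : ι → Fin 4 → ℝ) (j : ι) (c : Fin 4) :
    traceCoords S t j c = ∑ k, S j k * (traceWeight c * t k c) := by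
  simp [traceCoords, LinearEquiv.conj_apply, Matrix.mulVec, dotProduct, Fintype.sum_prod_type,
    Matrix.diagonal_apply, mul_assoc]

lemma det_traceCoords (S : Matrix ι ι ℝ) :
    LinearMap.det (traceCoords S) = S.det ^ 4 * 2 ^ Fintype.card ι := by
  have hsqrt : Real.sqrt 2 * Real.sqrt 2 = 2 := Real.mul_self_sqrt zero_le_two
  rw [traceCoords, LinearEquiv.conj_apply, LinearMap.comp_assoc, LinearMap.det_conj,
    LinearMap.det_toLin', Matrix.det_kronecker, Matrix.det_diagonal, Fin.prod_univ_four]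
  simp [traceWeight, hsqrt]

lemma traceForm_transpose_mul_self (S : Matrix ι ι ℝ) (t t' : ι → Fin 4 → ℝ) :
    traceForm (Sᵀ * S) t t' = ∑ j, ∑ c, traceCoords S t j c * traceCoords S t' j c := by
  have hcoords (t : ι → Fin 4 → ℝ) (j : ι) (c : Fin 4) :
      traceCoords S t j c = (S *ᵥ fun k => traceWeight c * t k c) j := traceCoords_apply S t j c
  simp_rw [traceForm_eq_sum_dotProduct, ← Matrix.mulVec_mulVec, Matrix.dotProduct_mulVec _ Sᵀ,
    Matrix.vecMul_transpose, hcoords]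
  exact Finset.sum_comm

open scoped MatrixOrder in
lemma exists_transpose_mul_self_eq {K : Matrix ι ι ℝ} (hK : K.PosDef) :
    ∃ S : Matrix ι ι ℝ, Sᵀ * S = K ∧ S.det ^ 2 = K.det := by
  have hsymm : (CFC.sqrt K)ᵀ = CFC.sqrt K :=
    (Matrix.nonneg_iff_posSemidef.mp (CFC.sqrt_nonneg K)).isHermitian
  have hsq : CFC.sqrt K * CFC.sqrt K = K := CFC.sqrt_mul_sqrt_self K hK.posSemidef.nonneg
  exact ⟨CFC.sqrt K, by rw [hsymm, hsq], by rw [sq, ← Matrix.det_mul, hsq]⟩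

lemma integral_shiftedGaussian_of_eq_sum_mul {κ α : Type*} [Fintype κ] [Fintype α]
    {B : LinearMap.BilinForm ℝ (κ → α → ℝ)} {T : (κ → α → ℝ) →ₗ[ℝ] (κ → α → ℝ)}
    (hB : ∀ x y, B x y = ∑ k, ∑ c, T x k c * T y k c) (hT : LinearMap.det T ≠ 0) (a : κ → α → ℝ) :
    ∫ x, shiftedGaussian B a x = (|LinearMap.det T|⁻¹ : ℝ) *
      ((2 * Real.pi : ℂ) ^ (1 / 2 : ℂ)) ^ (Fintype.card κ * Fintype.card α) := by
  have hfactor (x : κ → α → ℝ) : shiftedGaussian B a x =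
      ∏ k, ∏ c, Complex.exp (-(1 / 2 : ℂ) * (T x k c + T a k c * I) ^ 2) := by
    simp only [← Complex.exp_sum, shiftedGaussian, hB]
    push_cast
    simp only [← Finset.sum_sub_distrib, Finset.mul_sum, ← Finset.sum_add_distrib, neg_div,
      Finset.sum_div, ← Finset.sum_neg_distrib]
    refine congrArg _ (Finset.sum_congr rfl fun k _ => Finset.sum_congr rfl fun c _ => ?_)
    linear_combination (T a k c : ℂ) ^ 2 / 2 * Complex.I_sq
  have hgauss (k : κ) (c : α) : ∫ y : ℝ, Complex.exp (-(1 / 2 : ℂ) * (y + T a k c * I) ^ 2) =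
      (2 * Real.pi : ℂ) ^ (1 / 2 : ℂ) := by
    rw [GaussianFourier.integral_cexp_neg_mul_sq_add_real_mul_I (by norm_num)]
    ring_nf
  calc ∫ x, shiftedGaussian B a x
      = ∫ y, ∏ k, ∏ c, Complex.exp (-(1 / 2 : ℂ) * (y k c + T a k c * I) ^ 2)
          ∂(volume.map T) := by
        rw [integral_map T.continuous_of_finiteDimensional.measurable.aemeasurable
          (Continuous.aestronglyMeasurable (by fun_prop))]
        simp only [hfactor]
    _ = (|LinearMap.det T|⁻¹ : ℝ) *
          ∏ k, ∏ c, ∫ y : ℝ, Complex.exp (-(1 / 2 : ℂ) * (y + T a k c * I) ^ 2) := by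
        rw [Measure.map_linearMap_addHaar_eq_smul_addHaar _ hT, integral_smul_measure,
          ENNReal.toReal_ofReal (abs_nonneg _), abs_inv, Complex.real_smul,
          integral_fintype_prod_volume_eq_prod fun k (y : α → ℝ) =>
            ∏ c, Complex.exp (-(1 / 2 : ℂ) * (y c + T a k c * I) ^ 2)]
        exact congrArg _ (Finset.prod_congr rfl fun k _ =>
          integral_fintype_prod_volume_eq_prod fun c (y : ℝ) =>
            Complex.exp (-(1 / 2 : ℂ) * (y + T a k c * I) ^ 2))
    _ = _ := by
        simp only [hgauss, Finset.prod_const, Finset.card_univ]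
        rw [← pow_mul, mul_comm (Fintype.card α)]

lemma integral_shiftedGaussian_traceForm {K : Matrix ι ι ℝ} (hK : K.PosDef) (a : ι → Fin 4 → ℝ) :
    ∫ t, shiftedGaussian (traceForm K) a t =
      ((2 * Real.pi ^ 2 : ℝ) : ℂ) ^ Fintype.card ι * (K.det : ℂ)⁻¹ ^ 2 := by
  obtain ⟨S, rfl, hdet⟩ := exists_transpose_mul_self_eq hK
  have hdetT : LinearMap.det (traceCoords S) = (Sᵀ * S).det ^ 2 * 2 ^ Fintype.card ι := by
    rw [det_traceCoords, ← hdet]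
    ring
  have hpos : 0 < LinearMap.det (traceCoords S) := by
    have := hK.det_pos
    rw [hdetT]
    positivity
  have hsqrt : ((2 * Real.pi : ℂ) ^ (1 / 2 : ℂ)) ^ 4 = 4 * Real.pi ^ 2 := by
    rw [← Complex.cpow_nat_mul]
    norm_num
    ring
  rw [integral_shiftedGaussian_of_eq_sum_mul (traceForm_transpose_mul_self S) hpos.ne',
    abs_of_pos hpos, hdetT, Fintype.card_fin, mul_comm _ 4, pow_mul, hsqrt]
  push_cast
  rw [show (4 * Real.pi ^ 2 : ℂ) = 2 * (2 * Real.pi ^ 2) by ring, mul_pow]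
  field_simp

lemma zpow_mul_integral_shiftedGaussian_traceForm_inv {J : Matrix ι ι ℝ} (hJ : J.PosDef)
    (a : ι → Fin 4 → ℝ) :
    ((2 * Real.pi ^ 2 : ℝ) : ℂ) ^ (-(Fintype.card ι : ℤ)) * (J.det : ℂ) ^ (-2 : ℤ) *
      ∫ t, shiftedGaussian (traceForm J⁻¹) a t = 1 := by
  have hdet : (J.det : ℂ) ≠ 0 := by exact_mod_cast hJ.det_pos.ne'
  have hpi : ((2 * Real.pi ^ 2 : ℝ) : ℂ) ≠ 0 := by exact_mod_cast (by positivity)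
  rw [integral_shiftedGaussian_traceForm hJ.inv, Matrix.det_nonsing_inv, Ring.inverse_eq_inv',
    zpow_neg, zpow_neg, zpow_natCast]
  push_cast at hpi ⊢
  field_simp

/-- The entries of the block diagonal matrix with blocks `iXⱼ` as linear functionals of `X`. -/
noncomputable def dualEntry (x y : ι × Fin 2) : (ι → Fin 4 → ℝ) →ₗ[ℝ] ℂ where
  toFun t := if x.1 = y.1 then I * herm2 (t x.1) x.2 y.2 else 0
  map_add' t t' := by
    simp only [Pi.add_apply, herm2_add, Matrix.add_apply]
    split_ifs <;> ring
  map_smul' c t := by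
    simp only [Pi.smul_apply, herm2_smul, Matrix.smul_apply, RingHom.id_apply]
    split_ifs <;> simp [mul_left_comm]

omit [Fintype ι] in
lemma dualEntry_apply (x y : ι × Fin 2) (t : ι → Fin 4 → ℝ) :
    dualEntry x y t = if x.1 = y.1 then I * herm2 (t x.1) x.2 y.2 else 0 := rfl

omit [DecidableEq ι] in
lemma exists_traceForm_add_I_mul_eq (K : Matrix ι ι ℝ) (M : ι → Matrix (Fin 2) (Fin 2) ℂ) :
    ∃ u v : ι → Fin 4 → ℝ, (∀ j, herm2 (u j) + I • herm2 (v j) = M j) ∧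
      ∀ t, (traceForm K u t + I * traceForm K v t : ℂ) =
        ∑ j, ∑ k, (K j k : ℂ) * (M j * herm2 (t k)).trace := by
  choose u hu using fun j => exists_herm2_eq (ℜ (M j)).2
  choose v hv using fun j => exists_herm2_eq (ℑ (M j)).2
  have hM (j : ι) : herm2 (u j) + I • herm2 (v j) = M j := by
    rw [hu, hv, realPart_add_I_smul_imaginaryPart]
  refine ⟨u, v, hM, fun t => ?_⟩
  simp only [ofReal_traceForm, Finset.mul_sum, ← Finset.sum_add_distrib, ← hM, add_mul,
    Matrix.trace_add, smul_mul_assoc, Matrix.trace_smul, smul_eq_mul]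
  exact Finset.sum_congr rfl fun i _ => Finset.sum_congr rfl fun j _ => by ring

lemma dualEntry_apply_eq_sum_trace {J : Matrix ι ι ℝ} (hJ : IsUnit J.det) (x y : ι × Fin 2)
    (t : ι → Fin 4 → ℝ) : dualEntry x y t = ∑ j, ∑ k, (J⁻¹ j k : ℂ) *
      (Matrix.single y.2 x.2 (if x.1 = y.1 then I * J x.1 j else 0) * herm2 (t k)).trace := by
  have hinv (k : ι) : ∑ j, (J x.1 j : ℂ) * (J⁻¹ j k : ℝ) = if x.1 = k then 1 else 0 := by
    have hmul := congrArg Complex.ofReal (congrFun₂ (Matrix.mul_nonsing_inv J hJ) x.1 k)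
    simpa [Matrix.mul_apply, Matrix.one_apply, apply_ite Complex.ofReal] using hmul
  calc dualEntry x y t
      = ∑ k, (∑ j, (J x.1 j : ℂ) * (J⁻¹ j k : ℝ)) *
          if x.1 = y.1 then I * herm2 (t k) x.2 y.2 else 0 := by
        simp [hinv, dualEntry_apply]
    _ = _ := by
        simp only [Matrix.trace_single_mul, smul_eq_mul, Finset.sum_mul]
        rw [Finset.sum_comm]
        refine Finset.sum_congr rfl fun j _ => Finset.sum_congr rfl fun k _ => ?_
        split_ifs <;> ring

lemma isWickMatrix_dualEntry {J : Matrix ι ι ℝ} (hJ : J.PosDef) (a : ι → Fin 4 → ℝ) :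
    IsWickMatrix volume (shiftedGaussian (traceForm J⁻¹) a)
      (fun t => Matrix.of fun x y => shiftedEval a (dualEntry x y) t)
      fun x y z w =>
        if x.1 = y.1 ∧ z.1 = w.1 ∧ y.2 = z.2 ∧ x.2 = w.2 then -(J x.1 z.1 : ℂ) else 0 := by
  have hsymm : J⁻¹.IsSymm := hJ.inv.isHermitian
  choose u v huv hrep using fun x y : ι × Fin 2 => exists_traceForm_add_I_mul_eq J⁻¹ fun j =>
    Matrix.single y.2 x.2 (if x.1 = y.1 then I * J x.1 j else 0)
  have hentry (x y : ι × Fin 2) (t : ι → Fin 4 → ℝ) :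
      dualEntry x y t = traceForm J⁻¹ (u x y) t + I * traceForm J⁻¹ (v x y) t := by
    rw [hrep, dualEntry_apply_eq_sum_trace ((Matrix.isUnit_iff_isUnit_det J).mp hJ.isUnit)]
  have hcov (x y z w : ι × Fin 2) : dualEntry z w (u x y) + I * dualEntry z w (v x y) =
      if x.1 = y.1 ∧ z.1 = w.1 ∧ y.2 = z.2 ∧ x.2 = w.2 then -(J x.1 z.1 : ℂ) else 0 := by
    have huv' := congrFun₂ (huv x y z.1) z.2 w.2
    simp only [Matrix.add_apply, Matrix.smul_apply, smul_eq_mul, Matrix.single_apply] at huv'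
    have hfactor : dualEntry z w (u x y) + I * dualEntry z w (v x y) =
        if z.1 = w.1 then
          I * (herm2 (u x y z.1) z.2 w.2 + I * herm2 (v x y z.1) z.2 w.2) else 0 := by
      simp only [dualEntry_apply]
      split_ifs <;> ring
    rw [hfactor, huv']
    by_cases hz : z.1 = w.1 <;> by_cases hx : x.1 = y.1 <;> simp [hz, hx, ← mul_assoc]
  simpa only [hcov] using isWickMatrix_shiftedEval volume
    (traceForm_isSymm hsymm) (fun _ => traceForm_pos hJ.inv) a hentry

lemma det_diagonal_add_dualEntry (l : Fin 2 → ℂ) (a t : ι → Fin 4 → ℝ) :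
    (Matrix.diagonal (fun x : ι × Fin 2 => l x.2) +
        Matrix.of fun x y => shiftedEval a (dualEntry x y) t).det =
      ∏ j, (Matrix.diagonal l + I • herm2 (t j) - herm2 (a j)).det := by
  rw [← Matrix.det_blockDiagonal, ← Matrix.det_submatrix_equiv_self (Equiv.prodComm ι (Fin 2))]
  congr 1
  ext ⟨j, b⟩ ⟨k, c⟩
  rcases eq_or_ne j k with rfl | hjk
  · simp only [Matrix.add_apply, Matrix.sub_apply, Matrix.smul_apply, Matrix.of_apply, smul_eq_mul,
      Matrix.submatrix_apply, Matrix.blockDiagonal_apply, Matrix.diagonal_apply, Prod.mk.injEq,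
      Equiv.prodComm_apply, Prod.swap_prod_mk, shiftedEval, dualEntry_apply, true_and, if_true]
    linear_combination herm2 (a j) b c * Complex.I_sq
  · simp [Matrix.blockDiagonal_apply, shiftedEval, dualEntry_apply, hjk]

end HermitianTwoByTwo

section Duality

open Complex (I)

variable {ι : Type*} [LinearOrder ι] [Fintype ι]

/-- The integrand of the dual integral over families of `2 × 2` Hermitian matrices, for spectral
parameters `l` and contour `Xⱼ + i herm2 (a j)`. -/
noncomputable def dualIntegrand (J : Matrix ι ι ℝ) (l : Fin 2 → ℂ) (a t : ι → Fin 4 → ℝ) : ℂ :=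
  (∏ j, (Matrix.diagonal l + I • herm2 (t j) - herm2 (a j)).det) *
    shiftedGaussian (traceForm J⁻¹) a t

theorem F2_integral_representation_general {J : Matrix ι ι ℝ} (hJ : J.PosDef)
    (hpos : ∀ i j, 0 < J i j) (l : Fin 2 → ℂ) (a : ι → Fin 4 → ℝ) :
    Integrable (dualIntegrand J l a) ∧
    ∫ v, (hermDensity J v : ℂ) * ∏ b, (l b • 1 - hermOfCoords v).det =
      ((2 * Real.pi ^ 2 : ℝ) : ℂ) ^ (-(Fintype.card ι : ℤ)) * (J.det : ℂ) ^ (-2 : ℤ) *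
        ∫ t, dualIntegrand J l a t := by
  have hsymm : J.IsSymm := hJ.isHermitian
  have hH := isWickMatrix_neg_blockDiagonal_hermOfCoords (β := Fin 2) hsymm hpos
  have hX := isWickMatrix_dualEntry hJ a
  have hcov (x y z w : ι × Fin 2) :
      (if x.2 = y.2 ∧ z.2 = w.2 ∧ y.1 = z.1 ∧ x.1 = w.1 then (J x.1 y.1 : ℂ) else 0) =
        -if x.1 = w.1 ∧ z.1 = y.1 ∧ w.2 = z.2 ∧ x.2 = y.2 then -(J x.1 z.1 : ℂ) else 0 := by
    by_cases h : y.1 = z.1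
    · simp only [h, true_and, neg_ite, neg_neg, neg_zero]
      exact if_congr (by tauto) rfl rfl
    · simp [h, Ne.symm h]
  set A : Matrix (ι × Fin 2) (ι × Fin 2) ℂ := Matrix.diagonal fun x => l x.2
  have hint := hX.integrable_det_add A
  have hwick := hH.integral_det_add_eq hX hcov A
  simp only [A, det_diagonal_add_neg_blockDiagonal, det_diagonal_add_dualEntry] at hint hwick
  refine ⟨hint, ?_⟩
  have hmassH := hermDensity_zero_mul_integral_shiftedGaussian hsymm hpos
  have hmassX := zpow_mul_integral_shiftedGaussian_traceForm_inv hJ a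
  rw [eq_inv_of_mul_eq_one_right hmassX, eq_inv_of_mul_eq_one_right hmassH,
    inv_mul_eq_iff_eq_mul₀ (left_ne_zero_of_mul_eq_one hmassX)] at hwick
  rw [integral_hermDensity_mul hsymm, hwick, mul_left_comm,
    mul_inv_cancel_left₀ (left_ne_zero_of_mul_eq_one hmassH)]
  rfl

end Duality

section Laplacian

open scoped Matrix

variable {V : Type*} [Fintype V] [DecidableEq V] {G : SimpleGraph V} [DecidableRel G.Adj]

lemma posDef_smul_lapMatrix_add_one (G : SimpleGraph V) [DecidableRel G.Adj] {c : ℝ} (hc : 0 ≤ c) :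
    (c • G.lapMatrix ℝ + 1).PosDef :=
  Matrix.PosDef.posSemidef_add ((G.posSemidef_lapMatrix ℝ).smul hc) Matrix.PosDef.one

lemma smul_lapMatrix_add_one_mulVec_apply (c : ℝ) (z : V → ℝ) (i : V) :
    ((c • G.lapMatrix ℝ + 1) *ᵥ z) i = c * ∑ j ∈ G.neighborFinset i, (z i - z j) + z i := by
  rw [Matrix.add_mulVec, Matrix.smul_mulVec, Matrix.one_mulVec, Pi.add_apply, Pi.smul_apply,
    G.lapMatrix_mulVec_apply, Finset.sum_sub_distrib, Finset.sum_const,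
    G.card_neighborFinset_eq_degree, nsmul_eq_mul, smul_eq_mul]

lemma nonneg_of_smul_lapMatrix_add_one_mulVec_nonneg {c : ℝ} (hc : 0 ≤ c) {z : V → ℝ}
    (hz : 0 ≤ (c • G.lapMatrix ℝ + 1) *ᵥ z) : 0 ≤ z := by
  intro i
  have : Nonempty V := ⟨i⟩
  obtain ⟨k, hk⟩ := Finite.exists_min z
  have hdiff : ∑ j ∈ G.neighborFinset k, (z k - z j) ≤ 0 :=
    Finset.sum_nonpos fun j _ => sub_nonpos.mpr (hk j)
  have hzk : 0 ≤ c * ∑ j ∈ G.neighborFinset k, (z k - z j) + z k := by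
    rw [← smul_lapMatrix_add_one_mulVec_apply]
    exact hz k
  exact (by linarith [mul_nonpos_of_nonneg_of_nonpos hc hdiff] : 0 ≤ z k).trans (hk i)

lemma pos_of_smul_lapMatrix_add_one_mulVec_nonneg (hG : G.Preconnected) {c : ℝ} (hc : 0 < c)
    {z : V → ℝ} (hz : 0 ≤ (c • G.lapMatrix ℝ + 1) *ᵥ z) (hz0 : z ≠ 0) (i : V) : 0 < z i := by
  have hnonneg := nonneg_of_smul_lapMatrix_add_one_mulVec_nonneg hc.le hz
  have hadj {k j : V} (hk : z k = 0) (hkj : G.Adj k j) : z j = 0 := by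
    have hsum : ∑ j ∈ G.neighborFinset k, z j ≤ 0 := by
      have hzk := hz k
      rw [smul_lapMatrix_add_one_mulVec_apply] at hzk
      exact le_of_mul_le_mul_left (by simpa [hk] using hzk) hc
    exact (Finset.sum_eq_zero_iff_of_nonneg fun j _ => hnonneg j).mp
      (hsum.antisymm (Finset.sum_nonneg fun j _ => hnonneg j)) j
      ((G.mem_neighborFinset k j).mpr hkj)
  refine (hnonneg i).lt_of_ne' fun hi => hz0 (funext fun j => ?_)
  obtain ⟨p⟩ := hG i j
  induction p with
  | nil => exact hi
  | cons h _ ih => exact ih (hadj hi h)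

lemma inv_smul_lapMatrix_add_one_pos (hG : G.Preconnected) {c : ℝ} (hc : 0 < c) (i j : V) :
    0 < (c • G.lapMatrix ℝ + 1)⁻¹ i j := by
  have hunit := (Matrix.isUnit_iff_isUnit_det _).mp (posDef_smul_lapMatrix_add_one G hc.le).isUnit
  have hcol : (c • G.lapMatrix ℝ + 1) *ᵥ (c • G.lapMatrix ℝ + 1)⁻¹.col j = Pi.single j 1 := by
    rw [← Matrix.mulVec_single_one, Matrix.mulVec_mulVec, Matrix.mul_nonsing_inv _ hunit,
      Matrix.one_mulVec]
  refine pos_of_smul_lapMatrix_add_one_mulVec_nonneg hG hc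
    (z := (c • G.lapMatrix ℝ + 1)⁻¹.col j) (hcol ▸ Pi.single_nonneg.mpr zero_le_one) (fun h => ?_) i
  rw [h, Matrix.mulVec_zero] at hcol
  exact one_ne_zero (Pi.single_eq_zero_iff.mp hcol.symm)

end Laplacian

section BandMatrix

open Complex (I)
open scoped Matrix

/-- The difference operator `(y₀, …, yₘ) ↦ (y₁ - y₀, …, yₘ - yₘ₋₁)`. -/
def pathDiff (m : ℕ) : Matrix (Fin m) (Fin (m + 1)) ℝ :=
  Matrix.of fun k i => (if i = k.succ then 1 else 0) - if i = k.castSucc then 1 else 0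

lemma sum_pathDiff_smul {m : ℕ} {M : Type*} [AddCommGroup M] [Module ℝ M] (y : Fin (m + 1) → M)
    (k : Fin m) : ∑ i, pathDiff m k i • y i = y k.succ - y k.castSucc := by
  simp [pathDiff, sub_smul, Finset.sum_sub_distrib]

lemma pathDiff_mul_pathDiff {m : ℕ} (i j : Fin (m + 1)) (k : Fin m) :
    pathDiff m k i * pathDiff m k j =
      (if i = k.succ then if j = k.succ then 1 else 0 else 0) +
      (if i = k.castSucc then if j = k.castSucc then 1 else 0 else 0) -
      (if i = k.succ then if j = k.castSucc then 1 else 0 else 0) -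
      (if j = k.succ then if i = k.castSucc then 1 else 0 else 0) := by
  simp only [pathDiff, Matrix.of_apply]
  split_ifs <;> ring

lemma transpose_pathDiff_mul_pathDiff (m : ℕ) : (pathDiff m)ᵀ * pathDiff m = negLap (m + 1) := by
  have hsucc (i j : Fin (m + 1)) :
      ∑ k : Fin m, (if i = k.succ then if j = k.succ then (1 : ℝ) else 0 else 0) =
        if i = j ∧ (i : ℕ) ≠ 0 then 1 else 0 := by
    refine i.cases ?_ fun i => ?_
    · simp [(Fin.succ_ne_zero _).symm]
    · simp [eq_comm]
  have hcast (i j : Fin (m + 1)) :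
      ∑ k : Fin m, (if i = k.castSucc then if j = k.castSucc then (1 : ℝ) else 0 else 0) =
        if i = j ∧ (i : ℕ) ≠ m then 1 else 0 := by
    refine i.lastCases ?_ fun i => ?_
    · simp [(Fin.castSucc_ne_last _).symm]
    · simp [eq_comm, i.2.ne']
  have hcross (i j : Fin (m + 1)) :
      ∑ k : Fin m, (if i = k.succ then if j = k.castSucc then (1 : ℝ) else 0 else 0) =
        if (j : ℕ) + 1 = i then 1 else 0 := by
    refine i.cases ?_ fun i => ?_
    · simp [(Fin.succ_ne_zero _).symm]
    · simp only [Fin.succ_inj, Finset.sum_ite_eq, Finset.mem_univ, if_true, Fin.val_succ]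
      simp [Fin.ext_iff]
  ext i j
  simp only [Matrix.mul_apply, Matrix.transpose_apply, pathDiff_mul_pathDiff,
    Finset.sum_sub_distrib, Finset.sum_add_distrib, hsucc, hcast, hcross]
  simp only [negLap, Matrix.of_apply, Fin.ext_iff]
  split_ifs <;> first | omega | norm_num

open scoped Classical in
lemma negLap_eq_lapMatrix (m : ℕ) :
    negLap (m + 1) = (SimpleGraph.pathGraph (m + 1)).lapMatrix ℝ := by
  set L := (SimpleGraph.pathGraph (m + 1)).lapMatrix ℝ
  have hoff {i j : Fin (m + 1)} (hij : i ≠ j) : negLap (m + 1) i j = L i j := by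
    simp [L, negLap, SimpleGraph.lapMatrix, SimpleGraph.degMatrix, SimpleGraph.pathGraph_adj, hij,
      SimpleGraph.adjMatrix_apply, apply_ite (- · : ℝ → ℝ)]
  have hdiff : pathDiff m *ᵥ (fun _ => 1) = 0 := by
    ext k
    simp [Matrix.mulVec, dotProduct, pathDiff]
  have hrow : negLap (m + 1) *ᵥ (fun _ => 1) = L *ᵥ fun _ => 1 := by
    rw [← transpose_pathDiff_mul_pathDiff, ← Matrix.mulVec_mulVec, hdiff, Matrix.mulVec_zero,
      SimpleGraph.lapMatrix_mulVec_const_eq_zero]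
  ext i j
  rcases ne_or_eq i j with hij | rfl
  · exact hoff hij
  · have h := congrFun hrow i
    simp only [Matrix.mulVec, dotProduct, mul_one] at h
    rwa [Finset.sum_eq_sum_sdiff_singleton_add (Finset.mem_univ i),
      Finset.sum_eq_sum_sdiff_singleton_add (Finset.mem_univ i), Finset.sum_congr rfl fun k hk =>
        hoff (Finset.notMem_singleton.mp (Finset.mem_sdiff.mp hk).2).symm, add_right_inj] at h

lemma sum_negLap_smul_mul {m : ℕ} {A : Type*} [Ring A] [Algebra ℝ A] (y : Fin (m + 1) → A) :
    ∑ i, ∑ j, negLap (m + 1) i j • (y i * y j) = ∑ k : Fin m, (y k.succ - y k.castSucc) ^ 2 := by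
  simp only [← sum_pathDiff_smul, sq, Finset.sum_mul_sum, smul_mul_smul_comm,
    ← transpose_pathDiff_mul_pathDiff, Matrix.mul_apply, Matrix.transpose_apply, Finset.sum_smul]
  rw [Finset.sum_comm (s := (Finset.univ : Finset (Fin m)))]
  exact Finset.sum_congr rfl fun i _ => Finset.sum_comm

lemma inv_Jmat (n : ℕ) (W : ℝ) : (Jmat n W)⁻¹ = W ^ 2 • negLap (2 * n + 1) + 1 := by
  classical
  rw [Jmat, Matrix.nonsing_inv_nonsing_inv]
  rw [negLap_eq_lapMatrix, ← Matrix.isUnit_iff_isUnit_det]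
  exact (posDef_smul_lapMatrix_add_one _ (sq_nonneg W)).isUnit

lemma sum_inv_Jmat_smul_mul (n : ℕ) (W : ℝ) {A : Type*} [Ring A] [Algebra ℝ A]
    (y : Fin (2 * n + 1) → A) : ∑ i, ∑ j, (Jmat n W)⁻¹ i j • (y i * y j) =
      W ^ 2 • ∑ k : Fin (2 * n), (y k.succ - y k.castSucc) ^ 2 + ∑ j, y j ^ 2 := by
  simp [← sum_negLap_smul_mul, inv_Jmat, add_smul, mul_smul, Finset.sum_add_distrib,
    Finset.smul_sum, Matrix.one_apply, sq (y _), sq W]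

lemma posDef_Jmat (n : ℕ) (W : ℝ) : (Jmat n W).PosDef := by
  classical
  rw [Jmat, negLap_eq_lapMatrix]
  exact (posDef_smul_lapMatrix_add_one _ (sq_nonneg W)).inv

lemma Jmat_pos {n : ℕ} {W : ℝ} (hW : W ≠ 0) (i j : Fin (2 * n + 1)) : 0 < Jmat n W i j := by
  classical
  rw [Jmat, negLap_eq_lapMatrix]
  exact inv_smul_lapMatrix_add_one_pos (SimpleGraph.pathGraph_preconnected _) (by positivity) i j

lemma ofReal_traceForm_add_I_smul {ι : Type*} [Fintype ι] {K : Matrix ι ι ℝ} (hK : K.IsSymm)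
    (t a : ι → Fin 4 → ℝ) :
    (traceForm K t t - traceForm K a a + 2 * I * traceForm K t a : ℂ) =
      (∑ j, ∑ k, K j k • ((herm2 (t j) + I • herm2 (a j)) *
        (herm2 (t k) + I • herm2 (a k)))).trace := by
  have hsymm : traceForm K a t = traceForm K t a := by
    simpa using (traceForm_isSymm hK).eq a t
  have hexpand : (∑ j, ∑ k, K j k • ((herm2 (t j) + I • herm2 (a j)) *
        (herm2 (t k) + I • herm2 (a k)))).trace =
      traceForm K t t + I * traceForm K t a + I * traceForm K a t + I * I * traceForm K a a := by
    simp only [ofReal_traceForm, Matrix.trace_sum, Matrix.trace_smul, add_mul, mul_add,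
      smul_mul_assoc, mul_smul_comm, Matrix.trace_add, smul_eq_mul, Complex.real_smul,
      Finset.sum_add_distrib, Finset.mul_sum, mul_left_comm I, mul_assoc]
    ring
  rw [hexpand, hsymm]
  linear_combination -(traceForm K a a : ℂ) * Complex.I_sq

/-- The contour shift: `i herm2 (saddleShift l₀ η₁ η₂)` is `iΛ₀/2 + i diag(η₁, η₂)`. -/
noncomputable def saddleShift (l₀ η₁ η₂ : ℝ) : Fin 4 → ℝ := ![l₀ / 2 + η₁, l₀ / 2 + η₂, 0, 0]

lemma herm2_saddleShift (l₀ η₁ η₂ : ℝ) : herm2 (saddleShift l₀ η₁ η₂) =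
    ((l₀ : ℂ) / 2) • 1 + Matrix.diagonal ![(η₁ : ℂ), (η₂ : ℂ)] := by
  ext i j
  fin_cases i <;> fin_cases j <;> simp [herm2, saddleShift, Complex.ext_iff]

lemma det_diagonal_add_sub_saddleShift (l₀ η₁ η₂ : ℝ) (x : Fin 4 → ℝ) :
    (Matrix.diagonal ![((l₀ + η₁ : ℝ) : ℂ), ((l₀ + η₂ : ℝ) : ℂ)] + I • herm2 x -
        herm2 (saddleShift l₀ η₁ η₂)).det =
      -(herm2 x - (I * l₀ / 2) • (1 : Matrix (Fin 2) (Fin 2) ℂ)).det := by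
  have hdiag : Matrix.diagonal ![((l₀ + η₁ : ℝ) : ℂ), ((l₀ + η₂ : ℝ) : ℂ)] =
      (l₀ : ℂ) • 1 + Matrix.diagonal ![(η₁ : ℂ), (η₂ : ℂ)] := by
    ext i j
    fin_cases i <;> fin_cases j <;> simp
  have hI : I * (I * l₀ / 2) = -(l₀ / 2 : ℂ) := by linear_combination (l₀ / 2 : ℂ) * Complex.I_sq
  have hrot : Matrix.diagonal ![((l₀ + η₁ : ℝ) : ℂ), ((l₀ + η₂ : ℝ) : ℂ)] + I • herm2 x -
      herm2 (saddleShift l₀ η₁ η₂) =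
        I • (herm2 x - (I * l₀ / 2) • (1 : Matrix (Fin 2) (Fin 2) ℂ)) := by
    rw [herm2_saddleShift, hdiag, smul_sub, smul_smul, hI]
    module
  rw [hrot, Matrix.det_smul, Fintype.card_fin, Complex.I_sq, neg_one_mul]

lemma Xseq_coe {n : ℕ} (t : Fin (2 * n + 1) → Fin 4 → ℝ) (j : Fin (2 * n + 1)) :
    Xseq n t j = herm2 (t j) :=
  dif_pos j.2

lemma shiftedGaussian_traceForm_inv_Jmat (n : ℕ) (W : ℝ) (a : Fin 4 → ℝ)
    (t : Fin (2 * n + 1) → Fin 4 → ℝ) :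
    shiftedGaussian (traceForm (Jmat n W)⁻¹) (fun _ => a) t =
      Complex.exp (-((W : ℂ) ^ 2 / 2) * ∑ j ∈ Finset.Ico 1 (2 * n + 1),
          ((Xseq n t j - Xseq n t (j - 1)) ^ 2).trace
        - (1 / 2 : ℂ) * ∑ j ∈ Finset.range (2 * n + 1),
          ((Xseq n t j + I • herm2 a) ^ 2).trace) := by
  have hdiff : ∑ j ∈ Finset.Ico 1 (2 * n + 1), ((Xseq n t j - Xseq n t (j - 1)) ^ 2).trace =
      ∑ k : Fin (2 * n), ((herm2 (t k.succ) - herm2 (t k.castSucc)) ^ 2).trace := by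
    rw [Finset.sum_Ico_eq_sum_range, Nat.add_sub_cancel, Finset.sum_range]
    refine Finset.sum_congr rfl fun k _ => ?_
    rw [← Xseq_coe t k.succ, ← Xseq_coe t k.castSucc, Fin.val_succ, add_comm 1, Nat.add_sub_cancel,
      Fin.val_castSucc]
  have hsymm : (Jmat n W)⁻¹.IsSymm := (posDef_Jmat n W).inv.isHermitian
  rw [shiftedGaussian, ofReal_traceForm_add_I_smul hsymm, sum_inv_Jmat_smul_mul, hdiff,
    Finset.sum_range]
  simp only [add_sub_add_right_eq_sub, Xseq_coe, Matrix.trace_add, Matrix.trace_smul,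
    Matrix.trace_sum, Complex.real_smul]
  congr 1
  push_cast
  ring

lemma dualIntegrand_Jmat (n : ℕ) (W l₀ ξ₁ ξ₂ : ℝ) :
    dualIntegrand (Jmat n W) ![((l₀ + ξ₁ / ((2 * n + 1) * rho l₀) : ℝ) : ℂ),
        ((l₀ + ξ₂ / ((2 * n + 1) * rho l₀) : ℝ) : ℂ)]
      (fun _ => saddleShift l₀ (ξ₁ / ((2 * n + 1) * rho l₀)) (ξ₂ / ((2 * n + 1) * rho l₀))) =
    fun t => -G1 n W l₀ ξ₁ ξ₂ t := by
  ext t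
  have hshift : I • herm2
      (saddleShift l₀ (ξ₁ / ((2 * n + 1) * rho l₀)) (ξ₂ / ((2 * n + 1) * rho l₀))) =
        (I * l₀ / 2) • (1 : Matrix (Fin 2) (Fin 2) ℂ) +
          (I / (((2 * n + 1 : ℝ) * rho l₀ : ℝ) : ℂ)) • Matrix.diagonal ![(ξ₁ : ℂ), (ξ₂ : ℂ)] := by
    rw [herm2_saddleShift]
    ext i j
    fin_cases i <;> fin_cases j <;> simp <;> ring
  simp only [dualIntegrand, det_diagonal_add_sub_saddleShift]
  rw [Finset.prod_neg, Finset.card_univ, Fintype.card_fin, Odd.neg_one_pow ⟨n, rfl⟩,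
    shiftedGaussian_traceForm_inv_Jmat, hshift, G1, Finset.prod_range]
  simp only [Xseq_coe, ← add_assoc]
  ring

lemma F2_eq_integral_hermDensity (n : ℕ) (W l₁ l₂ : ℝ) : F2 n W l₁ l₂ =
    ∫ v, (hermDensity (Jmat n W) v : ℂ) *
      ∏ b, (![(l₁ : ℂ), (l₂ : ℂ)] b • 1 - hermOfCoords v).det := by
  simp only [Fin.prod_univ_two, ← mul_assoc]
  rfl

end BandMatrix

/-- the integral representation of `F₂` over `N`-tuples of 2×2 Hermitian
matrices; the integral converges absolutely and
`F₂ = −(2π²)^{−N}(det J)^{−2}·∫ … ∏dX_j`. -/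
theorem F2_integral_representation (n : ℕ) (W : ℝ) (hW : 0 < W)
    (l0 : ℝ) (hl0 : l0 ∈ Set.Ioo (-2 : ℝ) 2) (ξ₁ ξ₂ : ℝ) :
    Integrable (G1 n W l0 ξ₁ ξ₂) ∧
    F2 n W (l0 + ξ₁ / ((2*n+1) * rho l0)) (l0 + ξ₂ / ((2*n+1) * rho l0))
      = -(((2 * Real.pi^2 : ℝ) : ℂ))^(-((2*n+1 : ℕ) : ℤ)) *
          (((Jmat n W).det : ℝ) : ℂ)^(-2 : ℤ) *
          ∫ t : Fin (2*n+1) → Fin 4 → ℝ, G1 n W l0 ξ₁ ξ₂ t := by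
  obtain ⟨hint, heq⟩ := F2_integral_representation_general (posDef_Jmat n W) (Jmat_pos hW.ne')
    ![((l0 + ξ₁ / ((2*n+1) * rho l0) : ℝ) : ℂ), ((l0 + ξ₂ / ((2*n+1) * rho l0) : ℝ) : ℂ)]
    fun _ => saddleShift l0 (ξ₁ / ((2*n+1) * rho l0)) (ξ₂ / ((2*n+1) * rho l0))
  rw [dualIntegrand_Jmat] at hint heq
  refine ⟨by simpa using hint.neg, ?_⟩
  rw [F2_eq_integral_hermDensity, heq, integral_neg, Fintype.card_fin]
  ring
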